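/- arXiv:2109.09239 — 6 statements merged into one kernel-verified Lean document; each statement's English description precedes it below -/
import Mathlib

section
/- Assume Condition (A1) and the standing assumptions. Then there exist constants H₃, α₄ > 0, depending only on the constants of (A1) and of the standing assumptions, such that for every θ ∈ Θ(K) with I_* ≠ ∅ the normalized Hamming risk (almost full recovery) satisfies (1/|I_*|)·E_θ[ |Î(K)∖I_*| + |I_*∖Î(K)| ] ≤ H₃·(n/|I_*|)^{−(α₄ − 1)}. -/
open MeasureTheory Finset
open scoped Classical

/-- `ell n k = k * log(q*n/k)` with `q = e^2`; equals `0` at `k = 0` by Lean's conventions. -/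
noncomputable def ell (n k : ℕ) : ℝ := (k : ℝ) * Real.log (Real.exp 2 * n / k)

/-- The selector `Î(K)`: empty if the preselector `Ĩ(K)` is empty, otherwise all coordinates
with `X_i² ≥ K σ² log(q n / |Ĩ(K)|)`, where `q = e²`. -/
noncomputable def ihat {n : ℕ} (K σ : ℝ) (Itil : (Fin n → ℝ) → Finset (Fin n))
    (x : Fin n → ℝ) : Finset (Fin n) :=
  if Itil x = ∅ then ∅
  else Finset.univ.filter fun i =>
    K * σ ^ 2 * Real.log (Real.exp 2 * (n : ℝ) / (Itil x).card) ≤ (x i) ^ 2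

open scoped symmDiff

/-!
Let `s = |S|` and `L = log (q n / s)`. Adding or removing one index changes the penalty
`A σ² ℓ(s)` by about `A σ² L`, so a model `S` that is optimal for both `A₀` and `A₁` separates the
signal: `θ_i² ≤ A₀ σ² L` off `S` and `θ_i² ≥ A₁ σ² (L - 1)` on `S`. When the preselector has the
size of `S` up to constant factors, its random threshold is `K σ² L` up to `O(σ²)`. As
`A₀ < K < A₁`, misclassifying `i` then forces `ξ_i² ≥ κ L - O(1)` with `κ > 0`, an event of
probability `O(e^{-αξ κ L}) = O((n / s)^{-αξ κ})`. Adding the probability of a wrong preselector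
size and summing over the `n` coordinates yields the bound.
-/

/-! ### Log-sparsity and the penalty -/

/-- The log-sparsity `log (q n / s)`, with `q = e²`, of a model of size `s` among `n` coordinates,
so that `ℓ(s) = s * logSparsity n s`. -/
noncomputable def logSparsity (n s : ℝ) : ℝ := Real.log (Real.exp 2 * n / s)

section LogSparsity

variable {n s : ℝ}

lemma logSparsity_eq (hn : n ≠ 0) (hs : s ≠ 0) :
    logSparsity n s = 2 + Real.log n - Real.log s := by
  rw [logSparsity, Real.log_div (by positivity) hs, Real.log_mul (by positivity) hn, Real.log_exp]

lemma two_le_logSparsity (hs : 0 < s) (hsn : s ≤ n) : 2 ≤ logSparsity n s := by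
  rw [logSparsity_eq (hs.trans_le hsn).ne' hs.ne']
  linarith [Real.log_le_log hs hsn]

lemma abs_logSparsity_sub_logSparsity_le {δ M k : ℝ} (hn : n ≠ 0) (hs : 0 < s) (hδ : 0 < δ)
    (hδk : δ * s ≤ k) (hkM : k ≤ M * s) :
    |logSparsity n k - logSparsity n s| ≤ max |Real.log δ| |Real.log M| := by
  have hk : 0 < k := (mul_pos hδ hs).trans_le hδk
  have hdiff : logSparsity n k - logSparsity n s = -Real.log (k / s) := by
    rw [logSparsity_eq hn hk.ne', logSparsity_eq hn hs.ne', Real.log_div hk.ne' hs.ne']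
    ring
  rw [hdiff, abs_neg]
  exact abs_le_max_abs_abs (Real.log_le_log hδ ((le_div_iff₀ hs).2 hδk))
    (Real.log_le_log (by positivity) ((div_le_iff₀ hs).2 hkM))

lemma div_mul_exp_neg_mul_logSparsity_le_rpow {a : ℝ} (ha : 0 ≤ a) (hn : 0 < n) (hs : 0 < s) :
    n / s * Real.exp (-(a * logSparsity n s)) ≤ (n / s) ^ (-(a - 1)) := by
  have hexp : Real.exp (-(a * logSparsity n s)) ≤ (n / s) ^ (-a) := by
    rw [Real.rpow_def_of_pos (by positivity), Real.exp_le_exp, logSparsity_eq hn.ne' hs.ne',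
      Real.log_div hn.ne' hs.ne']
    linarith
  calc n / s * Real.exp (-(a * logSparsity n s)) ≤ n / s * (n / s) ^ (-a) := by gcongr
    _ = (n / s) ^ (-(a - 1)) := by
      rw [neg_sub, sub_eq_add_neg, Real.rpow_add (by positivity), Real.rpow_one]

end LogSparsity

lemma logSparsity_le_ell {n s : ℕ} (hs : 0 < s) (hsn : s ≤ n) : logSparsity n s ≤ ell n s := by
  have hL : 2 ≤ logSparsity n s := two_le_logSparsity (by exact_mod_cast hs) (by exact_mod_cast hsn)
  exact le_mul_of_one_le_left (by linarith) (by exact_mod_cast hs)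

lemma ell_succ_sub_ell_le {n s : ℕ} (hn : 0 < n) (hs : 0 < s) :
    ell n (s + 1) - ell n s ≤ logSparsity n s := by
  have hs' : (0 : ℝ) < s := by exact_mod_cast hs
  have hanti : logSparsity n (s + 1 : ℕ) ≤ logSparsity n s := by
    rw [logSparsity_eq (by positivity) (by positivity), logSparsity_eq (by positivity) hs'.ne']
    gcongr
    simp
  calc ell n (s + 1) - ell n s
      = (s + 1 : ℕ) * logSparsity n (s + 1 : ℕ) - s * logSparsity n s := rfl
    _ ≤ (s + 1 : ℕ) * logSparsity n s - s * logSparsity n s := by gcongr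
    _ = logSparsity n s := by push_cast; ring

lemma logSparsity_sub_one_le_ell_sub_ell_pred {n s : ℕ} (hn : 0 < n) (hs : 0 < s) :
    logSparsity n s - 1 ≤ ell n s - ell n (s - 1) := by
  obtain ⟨k, rfl⟩ := Nat.exists_eq_add_one.2 hs
  simp only [Nat.add_sub_cancel]
  change _ ≤ (k + 1 : ℕ) * logSparsity n (k + 1 : ℕ) - k * logSparsity n k
  rcases k.eq_zero_or_pos with rfl | hk
  · simp
  have hk' : (0 : ℝ) < k := by exact_mod_cast hk
  have hlog : k * (logSparsity n k - logSparsity n (k + 1 : ℕ)) ≤ 1 :=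
    calc k * (logSparsity n k - logSparsity n (k + 1 : ℕ))
        = k * Real.log ((k + 1 : ℕ) / k) := by
          rw [logSparsity_eq (by positivity) hk'.ne',
            logSparsity_eq (by positivity) (by positivity),
            Real.log_div (by positivity) hk'.ne']
          ring
      _ ≤ k * ((k + 1 : ℕ) / k - 1) := by
          gcongr
          exact Real.log_le_sub_one_of_pos (by positivity)
      _ = 1 := by push_cast; field_simp; ring
  push_cast at hlog ⊢
  linarith

/-! ### Penalized minimizers -/

/-- `S` minimizes the penalized cost `∑_{i ∉ I} f i + pen |I|` over all models `I`. With
`f i = θ_i²` and `pen k = A σ² ℓ(k)`, this is the property defining the active set `I_*(A, θ)`. -/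
def IsPenalizedMinimizer {ι : Type*} [Fintype ι] [DecidableEq ι] (pen : ℕ → ℝ) (f : ι → ℝ)
    (S : Finset ι) : Prop :=
  ∀ I : Finset ι, ∑ i ∈ Sᶜ, f i + pen #S ≤ ∑ i ∈ Iᶜ, f i + pen #I

namespace IsPenalizedMinimizer

variable {ι : Type*} [Fintype ι] [DecidableEq ι] {pen : ℕ → ℝ} {f : ι → ℝ} {S : Finset ι} {i : ι}

lemma apply_le_of_notMem (h : IsPenalizedMinimizer pen f S) (hi : i ∉ S) :
    f i ≤ pen (#S + 1) - pen #S := by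
  have hins := h (insert i S)
  rw [card_insert_of_notMem hi, compl_insert, ← add_sum_erase Sᶜ f (mem_compl.2 hi)] at hins
  linarith

lemma le_apply_of_mem (h : IsPenalizedMinimizer pen f S) (hi : i ∈ S) :
    pen #S - pen (#S - 1) ≤ f i := by
  have hers := h (S.erase i)
  rw [card_erase_of_mem hi, compl_erase, sum_insert (by simpa using hi)] at hers
  linarith

end IsPenalizedMinimizer

section ActiveSet

variable {n : ℕ} {c : ℝ} {f : Fin n → ℝ} {S : Finset (Fin n)} {i : Fin n}

lemma apply_le_mul_logSparsity_of_notMem (hc : 0 ≤ c) (hS : S.Nonempty)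
    (h : IsPenalizedMinimizer (fun k => c * ell n k) f S) (hi : i ∉ S) :
    f i ≤ c * logSparsity n #S :=
  calc f i ≤ c * ell n (#S + 1) - c * ell n #S := h.apply_le_of_notMem hi
    _ = c * (ell n (#S + 1) - ell n #S) := by ring
    _ ≤ c * logSparsity n #S := by
      gcongr
      exact ell_succ_sub_ell_le i.pos hS.card_pos

lemma mul_logSparsity_sub_one_le_apply_of_mem (hc : 0 ≤ c)
    (h : IsPenalizedMinimizer (fun k => c * ell n k) f S) (hi : i ∈ S) :
    c * (logSparsity n #S - 1) ≤ f i :=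
  calc c * (logSparsity n #S - 1) ≤ c * (ell n #S - ell n (#S - 1)) :=
        mul_le_mul_of_nonneg_left
          (logSparsity_sub_one_le_ell_sub_ell_pred i.pos (card_pos.2 ⟨i, hi⟩)) hc
    _ = c * ell n #S - c * ell n (#S - 1) := by ring
    _ ≤ f i := h.le_apply_of_mem hi

end ActiveSet

/-! ### Misclassification forces large noise -/

/-- The rate `κ` at which `(u - v)²` must grow with `L` when `u² ≈ B L` and `v² ≈ A L`. It comes
from Young's inequality with weights `2 B / (A + B)`. -/
noncomputable def separationRate (A B : ℝ) : ℝ := (B - A) ^ 2 / (2 * (A + B))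

lemma separationRate_pos {A B : ℝ} (hA : 0 ≤ A) (hAB : A < B) : 0 < separationRate A B :=
  div_pos (pow_pos (sub_pos.2 hAB) 2) (by linarith)

lemma separationRate_mul_sub_le_sub_sq {A B L m u v : ℝ} (hA : 0 ≤ A) (hAB : A < B) (hm : 0 ≤ m)
    (hu : B * (L - m) ≤ u ^ 2) (hv : v ^ 2 ≤ A * (L + m)) :
    separationRate A B * L - (B - A) * m ≤ (u - v) ^ 2 := by
  have hB : 0 < B := hA.trans_lt hAB
  have hsub : 0 < B - A := sub_pos.2 hAB
  have hsum : 0 < 2 * (A + B) := by linarith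
  have young : (B - A) * ((A + B) * u ^ 2 - 2 * B * v ^ 2) ≤ B * (2 * (A + B) * (u - v) ^ 2) := by
    linarith [sq_nonneg ((A + B) * u - 2 * B * v)]
  have hsep : B * ((B - A) ^ 2 * L - 2 * (A + B) * (B - A) * m) ≤
      B * (2 * (A + B) * (u - v) ^ 2) :=
    calc B * ((B - A) ^ 2 * L - 2 * (A + B) * (B - A) * m)
        ≤ B * ((B - A) ^ 2 * L - 2 * (A + B) * (B - A) * m) + B * (B - A) ^ 2 * m :=
          le_add_of_nonneg_right (by positivity)
      _ = (B - A) * ((A + B) * (B * (L - m)) - 2 * B * (A * (L + m))) := by ring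
      _ ≤ (B - A) * ((A + B) * u ^ 2 - 2 * B * v ^ 2) := by gcongr
      _ ≤ B * (2 * (A + B) * (u - v) ^ 2) := young
  calc separationRate A B * L - (B - A) * m
      = ((B - A) ^ 2 * L - 2 * (A + B) * (B - A) * m) / (2 * (A + B)) := by
        rw [separationRate]; field_simp
    _ ≤ (u - v) ^ 2 := (div_le_iff₀' hsum).2 (le_of_mul_le_mul_left hsep hB)

lemma separationRate_mul_sub_le_div_sq {A B L m σ x t : ℝ} (hA : 0 ≤ A) (hAB : A < B) (hm : 0 ≤ m)
    (hσ : 0 < σ) (hx : B * σ ^ 2 * (L - m) ≤ x ^ 2) (ht : t ^ 2 ≤ A * σ ^ 2 * (L + m)) :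
    separationRate A B * L - (B - A) * m ≤ ((x - t) / σ) ^ 2 := by
  rw [sub_div]
  apply separationRate_mul_sub_le_sub_sq hA hAB hm
  · rw [div_pow, le_div_iff₀ (by positivity)]
    linarith
  · rw [div_pow, div_le_iff₀ (by positivity)]
    linarith

lemma mem_ihat {n : ℕ} {K σ : ℝ} {Itil : (Fin n → ℝ) → Finset (Fin n)} {x : Fin n → ℝ} {i : Fin n}
    (hI : (Itil x).Nonempty) :
    i ∈ ihat K σ Itil x ↔ K * σ ^ 2 * logSparsity n #(Itil x) ≤ x i ^ 2 := by
  simp only [ihat, hI.ne_empty, if_false, mem_filter, mem_univ, true_and, logSparsity]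

section Misclassification

variable {n : ℕ} {K A₀ A₁ σ m : ℝ} {θ x : Fin n → ℝ} {Itil : (Fin n → ℝ) → Finset (Fin n)}
  {S : Finset (Fin n)} {i : Fin n}

lemma le_noise_sq_of_mem_ihat_sdiff (hA₀ : 0 ≤ A₀) (hA₀K : A₀ < K) (hσ : 0 < σ)
    (hS : S.Nonempty)
    (hmin : IsPenalizedMinimizer (fun k => A₀ * σ ^ 2 * ell n k) (fun i => θ i ^ 2) S)
    (hI : (Itil x).Nonempty) (hm : |logSparsity n #(Itil x) - logSparsity n #S| ≤ m)
    (hi : i ∈ ihat K σ Itil x \ S) :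
    separationRate A₀ K * logSparsity n #S - (K - A₀) * m ≤ ((x i - θ i) / σ) ^ 2 := by
  obtain ⟨hsel, hiS⟩ := mem_sdiff.1 hi
  have hm0 : 0 ≤ m := (abs_nonneg _).trans hm
  have hK : 0 < K := hA₀.trans_lt hA₀K
  apply separationRate_mul_sub_le_div_sq hA₀ hA₀K hm0 hσ
  · refine le_trans ?_ ((mem_ihat hI).1 hsel)
    gcongr
    linarith [(abs_le.1 hm).1]
  · refine (apply_le_mul_logSparsity_of_notMem (by positivity) hS hmin hiS).trans ?_
    gcongr
    linarith

lemma le_noise_sq_of_mem_sdiff_ihat (hK : 0 ≤ K) (hKA₁ : K < A₁) (hσ : 0 < σ)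
    (hmin : IsPenalizedMinimizer (fun k => A₁ * σ ^ 2 * ell n k) (fun i => θ i ^ 2) S)
    (hI : (Itil x).Nonempty) (hm_one : 1 ≤ m)
    (hm : |logSparsity n #(Itil x) - logSparsity n #S| ≤ m) (hi : i ∈ S \ ihat K σ Itil x) :
    separationRate K A₁ * logSparsity n #S - (A₁ - K) * m ≤ ((x i - θ i) / σ) ^ 2 := by
  obtain ⟨hiS, hsel⟩ := mem_sdiff.1 hi
  rw [mem_ihat hI, not_le] at hsel
  have hA₁ : 0 < A₁ := hK.trans_lt hKA₁
  rw [← neg_sub (θ i), neg_div, neg_sq]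
  apply separationRate_mul_sub_le_div_sq hK hKA₁ (by linarith) hσ
  · refine le_trans ?_ (mul_logSparsity_sub_one_le_apply_of_mem (by positivity) hmin hiS)
    gcongr
  · refine hsel.le.trans ?_
    gcongr
    linarith [(abs_le.1 hm).2]

lemma le_noise_sq_of_mem_symmDiff_ihat (hA₀ : 0 ≤ A₀) (hA₀K : A₀ < K) (hKA₁ : K < A₁)
    (hσ : 0 < σ) (hS : S.Nonempty)
    (hmin₀ : IsPenalizedMinimizer (fun k => A₀ * σ ^ 2 * ell n k) (fun i => θ i ^ 2) S)
    (hmin₁ : IsPenalizedMinimizer (fun k => A₁ * σ ^ 2 * ell n k) (fun i => θ i ^ 2) S)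
    (hI : (Itil x).Nonempty) (hm_one : 1 ≤ m)
    (hm : |logSparsity n #(Itil x) - logSparsity n #S| ≤ m) (hi : i ∈ ihat K σ Itil x ∆ S) :
    min (separationRate A₀ K) (separationRate K A₁) * logSparsity n #S - (A₁ - A₀) * m ≤
      ((x i - θ i) / σ) ^ 2 := by
  have hL : 2 ≤ logSparsity n #S :=
    two_le_logSparsity (by exact_mod_cast hS.card_pos) (by exact_mod_cast card_finset_fin_le S)
  rcases mem_symmDiff.1 hi with hfalsePos | hfalseNeg
  · refine le_trans ?_
      (le_noise_sq_of_mem_ihat_sdiff hA₀ hA₀K hσ hS hmin₀ hI hm (mem_sdiff.2 hfalsePos))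
    gcongr
    exact min_le_left _ _
  · refine le_trans ?_ (le_noise_sq_of_mem_sdiff_ihat (hA₀.trans hA₀K.le) hKA₁ hσ hmin₁ hI hm_one hm
      (mem_sdiff.2 hfalseNeg))
    gcongr
    exact min_le_right _ _

lemma setOf_mem_symmDiff_ihat_subset {δ M : ℝ} (hA₀ : 0 ≤ A₀) (hA₀K : A₀ < K) (hKA₁ : K < A₁)
    (hσ : 0 < σ) (hS : S.Nonempty)
    (hmin₀ : IsPenalizedMinimizer (fun k => A₀ * σ ^ 2 * ell n k) (fun i => θ i ^ 2) S)
    (hmin₁ : IsPenalizedMinimizer (fun k => A₁ * σ ^ 2 * ell n k) (fun i => θ i ^ 2) S)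
    (hδ : 0 < δ) (hm_one : 1 ≤ m) (hm : max |Real.log δ| |Real.log M| ≤ m) :
    {x | i ∈ ihat K σ Itil x ∆ S} ⊆
      {x | M * #S ≤ (#(Itil x) : ℝ)} ∪ {x | (#(Itil x) : ℝ) ≤ δ * #S} ∪
        {x | min (separationRate A₀ K) (separationRate K A₁) * logSparsity n #S - (A₁ - A₀) * m ≤
          ((x i - θ i) / σ) ^ 2} := by
  intro x hx
  by_contra hgood
  simp only [Set.mem_union, Set.mem_ofPred_eq, not_or, not_le] at hgood
  obtain ⟨⟨hltM, hgtδ⟩, hsmall⟩ := hgood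
  have hs : (0 : ℝ) < #S := by exact_mod_cast hS.card_pos
  have hcard : (0 : ℝ) < #(Itil x) := (mul_pos hδ hs).trans hgtδ
  have hI : (Itil x).Nonempty := card_pos.1 (by exact_mod_cast hcard)
  have hlog : |logSparsity n #(Itil x) - logSparsity n #S| ≤ m :=
    (abs_logSparsity_sub_logSparsity_le (by exact_mod_cast i.pos.ne') hs hδ hgtδ.le
      hltM.le).trans hm
  exact hsmall.not_ge
    (le_noise_sq_of_mem_symmDiff_ihat hA₀ hA₀K hKA₁ hσ hS hmin₀ hmin₁ hI hm_one hlog hx)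

end Misclassification

/-! ### Probability bounds -/

lemma measure_le_of_exponential_tail {Ω : Type*} [MeasurableSpace Ω] {μ : Measure Ω}
    [IsProbabilityMeasure μ] {Z : Ω → ℝ} {C H a : ℝ} (ha : 0 ≤ a)
    (h : ∀ M, 0 ≤ M → μ {ω | C + M ≤ Z ω} ≤ ENNReal.ofReal (H * Real.exp (-a * M))) (y : ℝ) :
    μ {ω | y ≤ Z ω} ≤ ENNReal.ofReal (max H 1 * Real.exp (-a * (y - C))) := by
  rcases le_total C y with hCy | hyC
  · calc μ {ω | y ≤ Z ω} = μ {ω | C + (y - C) ≤ Z ω} := by rw [add_sub_cancel]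
      _ ≤ ENNReal.ofReal (H * Real.exp (-a * (y - C))) := h _ (sub_nonneg.2 hCy)
      _ ≤ ENNReal.ofReal (max H 1 * Real.exp (-a * (y - C))) := by
        gcongr
        exact le_max_left _ _
  · refine prob_le_one.trans (ENNReal.one_le_ofReal.2 ?_)
    exact one_le_mul_of_one_le_of_one_le (le_max_right _ _)
      (Real.one_le_exp (mul_nonneg_of_nonpos_of_nonpos (by linarith) (by linarith)))

section HammingLoss

variable {Ω ι : Type*} [MeasurableSpace Ω] [Fintype ι] (μ : Measure Ω) (F : Ω → Finset ι)

-- Without measurability `∫⁻` is not subadditive, so each event is replaced by a measurable hull.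
lemma lintegral_card_le_sum_measure_mem :
    ∫⁻ ω, (#(F ω) : ENNReal) ∂μ ≤ ∑ i, μ {ω | i ∈ F ω} := by
  let hull (i : ι) : Set Ω := toMeasurable μ {ω | i ∈ F ω}
  have hhull (i : ι) : MeasurableSet (hull i) := measurableSet_toMeasurable μ _
  calc ∫⁻ ω, (#(F ω) : ENNReal) ∂μ
      = ∫⁻ ω, ∑ i, {ω | i ∈ F ω}.indicator 1 ω ∂μ := by simp [Set.indicator_apply]
    _ ≤ ∫⁻ ω, ∑ i, (hull i).indicator 1 ω ∂μ := by
        gcongr with ω i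
        exact subset_toMeasurable μ _
    _ = ∑ i, ∫⁻ ω, (hull i).indicator 1 ω ∂μ :=
        lintegral_finsetSum _ fun i _ => measurable_one.indicator (hhull i)
    _ = ∑ i, μ {ω | i ∈ F ω} := by
        simp only [lintegral_indicator_one (hhull _), hull, measure_toMeasurable]

lemma lintegral_card_sdiff_add_card_sdiff_div_le [DecidableEq ι] (S : Finset ι) {p : ℝ}
    (hp : ∀ i, μ {ω | i ∈ F ω ∆ S} ≤ ENNReal.ofReal p) :
    ∫⁻ ω, ENNReal.ofReal (((#(F ω \ S) : ℝ) + #(S \ F ω)) / #S) ∂μ ≤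
      ENNReal.ofReal (Fintype.card ι / #S * p) := by
  have hloss (ω : Ω) : ENNReal.ofReal (((#(F ω \ S) : ℝ) + #(S \ F ω)) / #S) =
      ENNReal.ofReal (#S : ℝ)⁻¹ * (#(F ω ∆ S) : ENNReal) := by
    have hcard : #(F ω ∆ S) = #(F ω \ S) + #(S \ F ω) := card_union_of_disjoint disjoint_sdiff_sdiff
    rw [hcard, div_eq_inv_mul, ENNReal.ofReal_mul (by positivity), ← Nat.cast_add,
      ENNReal.ofReal_natCast]
  simp only [hloss]
  rw [lintegral_const_mul' _ _ ENNReal.ofReal_ne_top]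
  calc ENNReal.ofReal (#S : ℝ)⁻¹ * ∫⁻ ω, (#(F ω ∆ S) : ENNReal) ∂μ
      ≤ ENNReal.ofReal (#S : ℝ)⁻¹ * ∑ _i : ι, ENNReal.ofReal p := by
        gcongr
        exact (lintegral_card_le_sum_measure_mem μ fun ω => F ω ∆ S).trans
          (sum_le_sum fun i _ => hp i)
    _ = ENNReal.ofReal (Fintype.card ι / #S * p) := by
        rw [sum_const, card_univ, nsmul_eq_mul, ← ENNReal.ofReal_natCast, ← mul_assoc,
          ← ENNReal.ofReal_mul (by positivity), ← ENNReal.ofReal_mul (by positivity),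
          inv_mul_eq_div]

end HammingLoss

lemma measure_mem_symmDiff_ihat_le {n : ℕ} {C H α K A₀ A₁ M δ σ m : ℝ} (hα : 0 ≤ α)
    (hA₀ : 0 ≤ A₀) (hA₀K : A₀ < K) (hKA₁ : K < A₁) (hδ : 0 < δ) (hσ : 0 < σ) (hm_one : 1 ≤ m)
    (hm : max |Real.log δ| |Real.log M| ≤ m) {μ : Measure (Fin n → ℝ)} [IsProbabilityMeasure μ]
    {θ : Fin n → ℝ} (Itil : (Fin n → ℝ) → Finset (Fin n)) {S : Finset (Fin n)} (hS : S.Nonempty)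
    {i : Fin n}
    (hnoise : ∀ t, 0 ≤ t → μ {x | C + t ≤ ((x i - θ i) / σ) ^ 2} ≤
      ENNReal.ofReal (H * Real.exp (-α * t)))
    (hmin₀ : IsPenalizedMinimizer (fun k => A₀ * σ ^ 2 * ell n k) (fun i => θ i ^ 2) S)
    (hmin₁ : IsPenalizedMinimizer (fun k => A₁ * σ ^ 2 * ell n k) (fun i => θ i ^ 2) S) :
    μ {x | i ∈ ihat K σ Itil x ∆ S} ≤
      μ {x | M * #S ≤ (#(Itil x) : ℝ)} + μ {x | (#(Itil x) : ℝ) ≤ δ * #S} +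
        ENNReal.ofReal (max H 1 * Real.exp (-α * (min (separationRate A₀ K) (separationRate K A₁) *
          logSparsity n #S - (A₁ - A₀) * m - C))) :=
  calc μ {x | i ∈ ihat K σ Itil x ∆ S}
      ≤ μ ({x | M * #S ≤ (#(Itil x) : ℝ)} ∪ {x | (#(Itil x) : ℝ) ≤ δ * #S} ∪
          {x | min (separationRate A₀ K) (separationRate K A₁) * logSparsity n #S -
            (A₁ - A₀) * m ≤ ((x i - θ i) / σ) ^ 2}) :=
        measure_mono
          (setOf_mem_symmDiff_ihat_subset hA₀ hA₀K hKA₁ hσ hS hmin₀ hmin₁ hδ hm_one hm)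
    _ ≤ _ := (measure_union_le _ _).trans
        (add_le_add (measure_union_le _ _) (measure_le_of_exponential_tail hα hnoise _))

/-! ### Almost full recovery -/

theorem stmt_9_general {C H α K A₀ A₁ H₀ α₀ α₁ M₁ δ : ℝ} (hα : 0 < α) (hA₀ : 0 ≤ A₀)
    (hA₀K : A₀ < K) (hKA₁ : K < A₁) (hH₀ : 0 ≤ H₀) (hα₀ : 0 < α₀) (hα₁ : 0 < α₁) (hδ : 0 < δ) :
    ∃ H₃ α₄ : ℝ, 0 < H₃ ∧ 0 < α₄ ∧ ∀ (n : ℕ) (σ : ℝ), 0 < σ →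
      ∀ (μ : Measure (Fin n → ℝ)) [IsProbabilityMeasure μ] (θ : Fin n → ℝ)
        (Itil : (Fin n → ℝ) → Finset (Fin n)) (S : Finset (Fin n)), S.Nonempty →
      (∀ (i : Fin n) (M : ℝ), 0 ≤ M → μ {x | C + M ≤ ((x i - θ i) / σ) ^ 2} ≤
        ENNReal.ofReal (H * Real.exp (-α * M))) →
      IsPenalizedMinimizer (fun k => A₀ * σ ^ 2 * ell n k) (fun i => θ i ^ 2) S →
      IsPenalizedMinimizer (fun k => A₁ * σ ^ 2 * ell n k) (fun i => θ i ^ 2) S →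
      μ {x | M₁ * #S ≤ (#(Itil x) : ℝ)} ≤ ENNReal.ofReal (H₀ * Real.exp (-α₀ * ell n #S)) →
      μ {x | (#(Itil x) : ℝ) ≤ δ * #S} ≤ ENNReal.ofReal (H₀ * Real.exp (-α₁ * ell n #S)) →
      ∫⁻ x, ENNReal.ofReal
          (((#(ihat K σ Itil x \ S) : ℝ) + #(S \ ihat K σ Itil x)) / #S) ∂μ ≤
        ENNReal.ofReal (H₃ * ((n : ℝ) / #S) ^ (-(α₄ - 1))) := by
  let κ := min (separationRate A₀ K) (separationRate K A₁)
  have hκ : 0 < κ := lt_min (separationRate_pos hA₀ hA₀K)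
    (separationRate_pos (hA₀.trans hA₀K.le) hKA₁)
  let m := max 1 (max |Real.log δ| |Real.log M₁|)
  let a := min (min α₀ α₁) (α * κ)
  have ha : 0 < a := lt_min (lt_min hα₀ hα₁) (mul_pos hα hκ)
  let H₃ := H₀ + H₀ + max H 1 * Real.exp (α * ((A₁ - A₀) * m + C))
  have hH₃ : 0 < H₃ := by positivity
  refine ⟨H₃, a, hH₃, ha, ?_⟩
  intro n σ hσ μ _ θ Itil S hS hnoise hmin₀ hmin₁ hover hunder
  have hs : (0 : ℝ) < #S := by exact_mod_cast hS.card_pos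
  have hsn : (#S : ℝ) ≤ n := by exact_mod_cast card_finset_fin_le S
  have hrate {c z : ℝ} (hac : a ≤ c) (hz : logSparsity n #S ≤ z) :
      -c * z ≤ -(a * logSparsity n #S) := by
    rw [neg_mul, neg_le_neg_iff]
    exact mul_le_mul hac hz (by linarith [two_le_logSparsity hs hsn]) (ha.le.trans hac)
  have hell : logSparsity n #S ≤ ell n #S := logSparsity_le_ell hS.card_pos (card_finset_fin_le S)
  have hcoord (i : Fin n) : μ {x | i ∈ ihat K σ Itil x ∆ S} ≤
      ENNReal.ofReal (H₃ * Real.exp (-(a * logSparsity n #S))) := by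
    refine (measure_mem_symmDiff_ihat_le (M := M₁) (m := m) hα.le hA₀ hA₀K hKA₁ hδ hσ
      (le_max_left _ _) (le_max_right _ _) Itil hS (hnoise i) hmin₀ hmin₁).trans ?_
    rw [show -α * (κ * logSparsity n #S - (A₁ - A₀) * m - C) =
      α * ((A₁ - A₀) * m + C) + -(α * κ) * logSparsity n #S by ring, Real.exp_add, ← mul_assoc,
      add_mul, add_mul, ENNReal.ofReal_add (by positivity) (by positivity),
      ENNReal.ofReal_add (by positivity) (by positivity)]
    gcongr
    · refine hover.trans ?_
      gcongr
      exact hrate ((min_le_left _ _).trans (min_le_left _ _)) hell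
    · refine hunder.trans ?_
      gcongr
      exact hrate ((min_le_left _ _).trans (min_le_right _ _)) hell
    · exact hrate (min_le_right _ _) le_rfl
  refine (lintegral_card_sdiff_add_card_sdiff_div_le μ _ S hcoord).trans
    (ENNReal.ofReal_le_ofReal ?_)
  rw [Fintype.card_fin, mul_left_comm]
  gcongr
  exact div_mul_exp_neg_mul_logSparsity_le_rpow ha.le (hs.trans_le hsn) hs

theorem stmt_9 (Cξ Hξ αξ : ℝ) (hCξ : 0 < Cξ) (hHξ : 0 < Hξ) (hαξ : 0 < αξ)
    (K A₀ A₁ α₀ α₁' M₁ δ : ℝ)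
    (hK : 0 < K) (hA₀ : 0 < A₀) (hA₁ : 0 < A₁) (hα₀ : 0 < α₀) (hα₁' : 0 < α₁')
    (hM₁ : 1 < M₁) (hδ : 0 < δ) (hδ1 : δ < 1) (hA01 : A₀ ≤ A₁)
    (hKC : A₀ + Cξ < K / 2)
    (hA1big : K / 2 + αξ⁻¹ * ((Cξ * αξ + 2) / 2 + 1) < A₁ / 6) :
    ∃ H₃ α₄ : ℝ, 0 < H₃ ∧ 0 < α₄ ∧
      ∀ (n : ℕ) (σ : ℝ), 0 < σ →
        ∀ P : (Fin n → ℝ) → Measure (Fin n → ℝ),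
          (∀ θ, IsProbabilityMeasure (P θ)) →
          (∀ (θ : Fin n → ℝ) (I : Finset (Fin n)) (M : ℝ), 0 ≤ M →
              P θ {x | Cξ * I.card + M ≤ ∑ i ∈ I, ((x i - θ i) / σ) ^ 2}
                ≤ ENNReal.ofReal (Hξ * Real.exp (-αξ * M))) →
          ∀ Itil : (Fin n → ℝ) → Finset (Fin n),
            (∀ (x : Fin n → ℝ) (I : Finset (Fin n)),
                (∑ i ∈ (Itil x)ᶜ, x i ^ 2) + K * σ ^ 2 * ell n (Itil x).card
                  ≤ (∑ i ∈ Iᶜ, x i ^ 2) + K * σ ^ 2 * ell n I.card) →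
            ∀ Istar : ℝ → (Fin n → ℝ) → Finset (Fin n),
              (∀ (A : ℝ) (θ : Fin n → ℝ), 0 < A → ∀ I : Finset (Fin n),
                  (∑ i ∈ (Istar A θ)ᶜ, θ i ^ 2) + A * σ ^ 2 * ell n (Istar A θ).card
                    ≤ (∑ i ∈ Iᶜ, θ i ^ 2) + A * σ ^ 2 * ell n I.card) →
              (∀ (θ : Fin n → ℝ) (M : ℝ), 0 ≤ M →
                  P θ {x | M₁ * (Istar A₀ θ).card + M ≤ ((Itil x).card : ℝ)}
                    ≤ ENNReal.ofReal (Hξ / (1 - Real.exp (-1)) *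
                        Real.exp (-α₀ * ell n (Istar A₀ θ).card - α₀ * M / 2))) →
              (∀ θ : Fin n → ℝ,
                  P θ {x | ((Itil x).card : ℝ) ≤ δ * (Istar A₁ θ).card}
                    ≤ ENNReal.ofReal (Hξ / (1 - Real.exp (-1)) *
                        Real.exp (-α₁' * ell n (Istar A₁ θ).card))) →
              ∀ θ : Fin n → ℝ, Istar A₁ θ = Istar A₀ θ → Istar A₁ θ ≠ ∅ →
                (∫⁻ x, ENNReal.ofReal
                    ((((ihat K σ Itil x \ Istar A₁ θ).card : ℝ) +
                        ((Istar A₁ θ \ ihat K σ Itil x).card : ℝ)) /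
                      ((Istar A₁ θ).card : ℝ)) ∂(P θ))
                  ≤ ENNReal.ofReal
                      (H₃ * ((n : ℝ) / ((Istar A₁ θ).card : ℝ)) ^ (-(α₄ - 1))) := by
  have hH₀ : 0 ≤ Hξ / (1 - Real.exp (-1)) := div_nonneg hHξ.le (by simp)
  have hM : 0 < αξ⁻¹ * ((Cξ * αξ + 2) / 2 + 1) := by positivity
  obtain ⟨H₃, α₄, hH₃, hα₄, h⟩ := stmt_9_general (C := Cξ) (H := Hξ) (M₁ := M₁) hαξ hA₀.le
    (show A₀ < K by linarith) (show K < A₁ by linarith) hH₀ hα₀ hα₁' hδ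
  refine ⟨H₃, α₄, hH₃, hα₄, ?_⟩
  intro n σ hσ P _ hnoise Itil _ Istar hIstar hover hunder θ hEq hne
  exact h n σ hσ (P θ) θ Itil (Istar A₁ θ) (nonempty_iff_ne_empty.2 hne)
    (fun i M hM => by simpa using hnoise θ {i} M hM) (hEq ▸ hIstar A₀ θ hA₀) (hIstar A₁ θ hA₁)
    (by simpa [hEq] using hover θ 0 le_rfl) (hunder θ)
end

section
/- Assume Condition (A1). Then for every θ ∈ ℝⁿ and every M ≥ 0: ℙ_θ( max_{I ⊆ [n]} [ ∑_{i∈I} ξ_i² − C_ξ|I| − α_ξ^{−1}( |I| + log C(n,|I|) ) ] ≥ M ) ≤ H₀·e^{−α_ξ M}, where C(n,k) denotes the binomial coefficient 'n choose k' and H₀ = H_ξ/(1 − e^{−1}). -/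
open MeasureTheory Finset
open scoped Classical

/-! The event that the penalised maximum reaches level `M` is contained in the union over `I` of the
events that the deviation of `I` reaches `M + α⁻¹ * w I`, where `w I = #I + log (n.choose #I)`. The
exponential tail bound turns the penalty into the weight `e ^ (-w I) = e ^ (-#I) / n.choose #I`.
Since `n.choose k` subsets share the cardinality `k`, these weights sum to a partial sum of the
geometric series of ratio `e⁻¹`, hence to at most `1 / (1 - e⁻¹)`. -/

theorem sum_powerset_inv_choose_mul_apply_card {ι K : Type*} [DivisionSemiring K] [CharZero K]
    (s : Finset ι) (f : ℕ → K) :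
    ∑ t ∈ s.powerset, ((#s).choose #t : K)⁻¹ * f #t = ∑ k ∈ range (#s + 1), f k := by
  rw [sum_powerset_apply_card (fun k ↦ ((#s).choose k : K)⁻¹ * f k)]
  refine sum_congr rfl fun k hk ↦ ?_
  have hchoose : ((#s).choose k : K) ≠ 0 :=
    Nat.cast_ne_zero.2 (Nat.choose_ne_zero (Nat.lt_succ_iff.1 (mem_range.1 hk)))
  rw [nsmul_eq_mul, mul_inv_cancel_left₀ hchoose]

theorem sum_powerset_inv_choose_mul_pow_card_le {ι : Type*} (s : Finset ι) {r : ℝ}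
    (hr₀ : 0 ≤ r) (hr₁ : r < 1) :
    ∑ t ∈ s.powerset, ((#s).choose #t : ℝ)⁻¹ * r ^ #t ≤ (1 - r)⁻¹ := by
  rw [sum_powerset_inv_choose_mul_apply_card s (r ^ ·)]
  exact sum_le_hasSum _ (fun k _ ↦ pow_nonneg hr₀ k) (hasSum_geometric_of_lt_one hr₀ hr₁)

theorem sum_exp_neg_card_add_log_choose_le (ι : Type*) [Fintype ι] :
    ∑ I : Finset ι, Real.exp (-(#I + Real.log ((Fintype.card ι).choose #I)))
      ≤ (1 - Real.exp (-1))⁻¹ := by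
  have hweight (I : Finset ι) :
      Real.exp (-(#I + Real.log ((Fintype.card ι).choose #I)))
        = ((Fintype.card ι).choose #I : ℝ)⁻¹ * Real.exp (-1) ^ #I := by
    have hchoose : (0 : ℝ) < (Fintype.card ι).choose #I :=
      Nat.cast_pos.2 (Nat.choose_pos (card_le_univ I))
    rw [neg_add_rev, Real.exp_add, Real.exp_neg (Real.log _), Real.exp_log hchoose,
      ← Real.exp_nat_mul, mul_neg_one]
  simpa only [hweight, powerset_univ, card_univ] using
    sum_powerset_inv_choose_mul_pow_card_le (univ : Finset ι) (Real.exp_pos (-1)).le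
      (Real.exp_lt_one_iff.2 neg_one_lt_zero)

section UnionBound

variable {Ω κ : Type*} [MeasurableSpace Ω] [Fintype κ] [Nonempty κ] (μ : Measure Ω)

theorem measure_le_iSup_le_sum {β : Type*} [ConditionallyCompleteLinearOrder β]
    (Z : κ → Ω → β) (b : β) :
    μ {ω | b ≤ ⨆ i, Z i ω} ≤ ∑ i, μ {ω | b ≤ Z i ω} := by
  have hsubset : {ω | b ≤ ⨆ i, Z i ω} ⊆ ⋃ i, {ω | b ≤ Z i ω} := fun ω hω ↦ by
    obtain ⟨i, hi⟩ := exists_eq_ciSup_of_finite (f := fun i ↦ Z i ω)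
    exact Set.mem_iUnion.2 ⟨i, hω.trans_eq hi.symm⟩
  exact (measure_mono hsubset).trans (measure_iUnion_fintype_le μ _)

theorem measure_le_iSup_sub_le_of_exp_tail {Z : κ → Ω → ℝ} {H α : ℝ} (hα : 0 < α)
    (htail : ∀ i M, 0 ≤ M → μ {ω | M ≤ Z i ω} ≤ ENNReal.ofReal (H * Real.exp (-α * M)))
    {w : κ → ℝ} (hw : ∀ i, 0 ≤ w i) {M : ℝ} (hM : 0 ≤ M) :
    μ {ω | M ≤ ⨆ i, (Z i ω - α⁻¹ * w i)}
      ≤ ENNReal.ofReal (H * Real.exp (-α * M)) * ENNReal.ofReal (∑ i, Real.exp (-w i)) := by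
  have hterm (i : κ) : μ {ω | M ≤ Z i ω - α⁻¹ * w i}
      ≤ ENNReal.ofReal (H * Real.exp (-α * M)) * ENNReal.ofReal (Real.exp (-w i)) := by
    have hexponent : -α * (M + α⁻¹ * w i) = -α * M + -w i := by
      field_simp
      ring
    have hlevel : 0 ≤ M + α⁻¹ * w i := add_nonneg hM (mul_nonneg (inv_nonneg.2 hα.le) (hw i))
    simpa only [le_sub_iff_add_le, hexponent, Real.exp_add, ← mul_assoc,
      ENNReal.ofReal_mul' (Real.exp_pos (-w i)).le] using htail i _ hlevel
  calc μ {ω | M ≤ ⨆ i, (Z i ω - α⁻¹ * w i)}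
      ≤ ∑ i, μ {ω | M ≤ Z i ω - α⁻¹ * w i} := measure_le_iSup_le_sum μ _ M
    _ ≤ ∑ i, ENNReal.ofReal (H * Real.exp (-α * M)) * ENNReal.ofReal (Real.exp (-w i)) :=
        sum_le_sum fun i _ ↦ hterm i
    _ = ENNReal.ofReal (H * Real.exp (-α * M)) * ENNReal.ofReal (∑ i, Real.exp (-w i)) := by
        rw [← mul_sum, ENNReal.ofReal_sum_of_nonneg fun i _ ↦ (Real.exp_pos _).le]

end UnionBound

theorem stmt_15_general {Ω ι : Type*} [MeasurableSpace Ω] [Fintype ι] (μ : Measure Ω)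
    (Z : Finset ι → Ω → ℝ) {H α : ℝ} (hα : 0 < α)
    (htail : ∀ I M, 0 ≤ M → μ {ω | M ≤ Z I ω} ≤ ENNReal.ofReal (H * Real.exp (-α * M)))
    {M : ℝ} (hM : 0 ≤ M) :
    μ {ω | M ≤ ⨆ I : Finset ι,
          (Z I ω - α⁻¹ * ((#I : ℝ) + Real.log ((Fintype.card ι).choose #I)))}
      ≤ ENNReal.ofReal (H / (1 - Real.exp (-1)) * Real.exp (-α * M)) := by
  have hpenalty (I : Finset ι) : 0 ≤ (#I : ℝ) + Real.log ((Fintype.card ι).choose #I) :=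
    add_nonneg (Nat.cast_nonneg _) (Real.log_natCast_nonneg _)
  have hmass : 0 ≤ (1 - Real.exp (-1))⁻¹ :=
    inv_nonneg.2 (sub_nonneg.2 (Real.exp_lt_one_iff.2 neg_one_lt_zero).le)
  refine (measure_le_iSup_sub_le_of_exp_tail μ hα htail hpenalty hM).trans ?_
  rw [div_eq_mul_inv, mul_right_comm, ENNReal.ofReal_mul' hmass]
  gcongr
  exact sum_exp_neg_card_add_log_choose_le ι

theorem stmt_15 (n : ℕ) (σ : ℝ) (hσ : 0 < σ)
    (Cξ Hξ αξ : ℝ) (hCξ : 0 < Cξ) (hHξ : 0 < Hξ) (hαξ : 0 < αξ)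
    (P : (Fin n → ℝ) → Measure (Fin n → ℝ))
    (hP : ∀ θ, IsProbabilityMeasure (P θ))
    (hA1 : ∀ (θ : Fin n → ℝ) (I : Finset (Fin n)) (M : ℝ), 0 ≤ M →
      P θ {x | Cξ * I.card + M ≤ ∑ i ∈ I, ((x i - θ i) / σ) ^ 2}
        ≤ ENNReal.ofReal (Hξ * Real.exp (-αξ * M)))
    (θ : Fin n → ℝ) (M : ℝ) (hM : 0 ≤ M) :
    P θ {x | M ≤ ⨆ I : Finset (Fin n),
          ((∑ i ∈ I, ((x i - θ i) / σ) ^ 2) - Cξ * I.card -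
            αξ⁻¹ * ((I.card : ℝ) + Real.log (n.choose I.card)))}
      ≤ ENNReal.ofReal (Hξ / (1 - Real.exp (-1)) * Real.exp (-αξ * M)) := by
  simpa only [Fintype.card_fin] using stmt_15_general (P θ)
    (fun I x ↦ ∑ i ∈ I, ((x i - θ i) / σ) ^ 2 - Cξ * #I) hαξ
    (fun I t ht ↦ by simpa only [le_sub_iff_add_le'] using hA1 θ I t ht) hM
end

section
/- Assume Condition (A1). Let q′ > 1 and let M_ξ be any constant with M_ξ ≥ α_ξ^{−1}( (C_ξα_ξ + 2)/log q′ + 1 ). Then for every θ ∈ ℝⁿ and every M ≥ 0: ∑_{I ⊆ [n]} ℙ_θ( ∑_{i∈I} ξ_i² ≥ M_ξ·|I|·log(q′n/|I|) + M ) ≤ H₀·e^{−α_ξ M}, where the sum runs over all 2ⁿ subsets of [n], the quantity |I|·log(q′n/|I|) is interpreted as 0 for I = ∅, and H₀ = H_ξ/(1 − e^{−1}). -/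
open MeasureTheory Finset
open scoped Classical

/-!
A set of size `k` has its threshold lifted from `Cξ k` to `Mξ k log (q' n / k)`. The condition on
`Mξ` makes this excess, multiplied by `αξ`, at least `k (2 + log (q' n / k))`, so the tail bound
improves by a factor `e ^ (-2 k) (k / n) ^ k`. There are `n.choose k` sets of size `k`, and
`n.choose k * (k / n) ^ k ≤ e ^ k`, so the union bound is dominated by the geometric series
`∑ e ^ (-k)`.
-/

lemma choose_mul_div_pow_le_exp (n k : ℕ) {x : ℝ} (hx : 0 ≤ x) :
    n.choose k * (x / n) ^ k ≤ Real.exp x := by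
  have hcancel : n * (x / n) ≤ x := by
    rw [mul_div_left_comm]
    exact mul_le_of_le_one_right hx (div_self_le_one _)
  calc n.choose k * (x / n) ^ k
      ≤ (n : ℝ) ^ k / k.factorial * (x / n) ^ k := by
        gcongr
        exact Nat.choose_le_pow_div k n
    _ = (n * (x / n)) ^ k / k.factorial := by rw [mul_pow, div_mul_eq_mul_div]
    _ ≤ x ^ k / k.factorial := by gcongr
    _ ≤ Real.exp x := Real.pow_div_factorial_le_exp x hx k

lemma sum_finset_pow_card_mul_div_pow_card_le (ι : Type*) [Fintype ι] {r : ℝ} (hr : 0 ≤ r)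
    (hr_lt : r * Real.exp 1 < 1) :
    ∑ I : Finset ι, r ^ #I * ((#I : ℝ) / Fintype.card ι) ^ #I ≤ (1 - r * Real.exp 1)⁻¹ := by
  have hbase : 0 ≤ r * Real.exp 1 := by positivity
  calc ∑ I : Finset ι, r ^ #I * ((#I : ℝ) / Fintype.card ι) ^ #I
      = ∑ k ∈ range (Fintype.card ι + 1),
          (Fintype.card ι).choose k • (r ^ k * ((k : ℝ) / Fintype.card ι) ^ k) := by
        rw [← powerset_univ, ← card_univ,
          sum_powerset_apply_card fun k : ℕ => r ^ k * ((k : ℝ) / #(univ : Finset ι)) ^ k]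
    _ ≤ ∑ k ∈ range (Fintype.card ι + 1), (r * Real.exp 1) ^ k := by
        gcongr with k
        rw [nsmul_eq_mul, mul_left_comm, mul_pow, Real.exp_one_pow]
        gcongr
        exact choose_mul_div_pow_le_exp (Fintype.card ι) k k.cast_nonneg
    _ ≤ (1 - r * Real.exp 1)⁻¹ := by
        rw [← tsum_geometric_of_lt_one hbase hr_lt]
        exact (summable_geometric_of_lt_one hbase hr_lt).sum_le_tsum _ fun k _ => by positivity

lemma add_le_mul_mul_sub {a b C l L m : ℝ} (ha : 0 < a) (hb : 0 ≤ C * a + b) (hl : 0 < l)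
    (hlL : l ≤ L) (hm : a⁻¹ * ((C * a + b) / l + 1) ≤ m) : b + L ≤ a * (m * L - C) := by
  have hL : 0 ≤ L := hl.le.trans hlL
  have hratio : C * a + b ≤ (C * a + b) / l * L := by
    rw [div_mul_eq_mul_div, le_div_iff₀ hl]
    gcongr
  have hslope : ((C * a + b) / l + 1) * L ≤ a * m * L := by
    gcongr
    rwa [inv_mul_le_iff₀ ha] at hm
  linarith

lemma log_mul_div_nonneg {q : ℝ} {n k : ℕ} (hq : 1 ≤ q) (hkn : k ≤ n) :
    0 ≤ Real.log (q * n / k) := by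
  rcases k.eq_zero_or_pos with rfl | hk
  · simp
  refine Real.log_nonneg ((one_le_div₀ (by positivity)).2 ?_)
  exact (Nat.cast_le.2 hkn).trans (le_mul_of_one_le_left n.cast_nonneg hq)

lemma exp_neg_mul_log_le_div_pow {q : ℝ} {n k : ℕ} (hq : 1 ≤ q) (hkn : k ≤ n) :
    Real.exp (-(k * Real.log (q * n / k))) ≤ ((k : ℝ) / n) ^ k := by
  rcases k.eq_zero_or_pos with rfl | hk
  · simp
  have hn : 0 < n := hk.trans_le hkn
  rw [← mul_neg, Real.exp_nat_mul, Real.exp_neg, Real.exp_log (by positivity), inv_div]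
  gcongr
  exact le_mul_of_one_le_left n.cast_nonneg hq

lemma mul_two_add_log_le_mul_excess {a C q m : ℝ} {n k : ℕ} (hC : 0 ≤ C) (ha : 0 < a) (hq : 1 < q)
    (hm : a⁻¹ * ((C * a + 2) / Real.log q + 1) ≤ m) (hkn : k ≤ n) :
    k * (2 + Real.log (q * n / k)) ≤ a * (m * k * Real.log (q * n / k) - C * k) := by
  rcases k.eq_zero_or_pos with rfl | hk
  · simp
  have hlog : Real.log q ≤ Real.log (q * n / k) := by
    gcongr
    rw [le_div_iff₀ (by positivity)]
    gcongr
  calc k * (2 + Real.log (q * n / k))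
      ≤ k * (a * (m * Real.log (q * n / k) - C)) := by
        gcongr
        exact add_le_mul_mul_sub ha (by positivity) (Real.log_pos hq) hlog hm
    _ = a * (m * k * Real.log (q * n / k) - C * k) := by ring

section TailBounds

variable {Ω : Type*} [MeasurableSpace Ω] {μ : Measure Ω} {a C H q m M : ℝ}

lemma measure_mul_log_add_le_le {f : Ω → ℝ} {n k : ℕ} (hC : 0 ≤ C) (ha : 0 < a)
    (htail : ∀ t, 0 ≤ t → μ {ω | C * k + t ≤ f ω} ≤ ENNReal.ofReal (H * Real.exp (-a * t)))
    (hq : 1 < q) (hm : a⁻¹ * ((C * a + 2) / Real.log q + 1) ≤ m) (hkn : k ≤ n) (hM : 0 ≤ M) :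
    μ {ω | m * k * Real.log (q * n / k) + M ≤ f ω} ≤
      ENNReal.ofReal (H * Real.exp (-a * M)) *
        ENNReal.ofReal (Real.exp (-2) ^ k * ((k : ℝ) / n) ^ k) := by
  set L := Real.log (q * n / k)
  set excess := m * k * L - C * k
  have hexcess : k * (2 + L) ≤ a * excess := mul_two_add_log_le_mul_excess hC ha hq hm hkn
  have hsplit : m * k * L + M = C * k + (M + excess) := by
    simp only [excess]
    ring
  have hL : 0 ≤ L := log_mul_div_nonneg hq.le hkn
  have hexcess_nonneg : 0 ≤ excess :=
    nonneg_of_mul_nonneg_right (le_trans (by positivity) hexcess) ha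
  have hgain : Real.exp (-a * excess) ≤ Real.exp (-2) ^ k * ((k : ℝ) / n) ^ k :=
    calc Real.exp (-a * excess)
        ≤ Real.exp (k * -2 + -(k * L)) := by gcongr; linarith
      _ = Real.exp (-2) ^ k * Real.exp (-(k * L)) := by rw [Real.exp_add, Real.exp_nat_mul]
      _ ≤ Real.exp (-2) ^ k * ((k : ℝ) / n) ^ k := by
        gcongr
        exact exp_neg_mul_log_le_div_pow hq.le hkn
  calc μ {ω | m * k * L + M ≤ f ω}
      = μ {ω | C * k + (M + excess) ≤ f ω} := by rw [hsplit]
    _ ≤ ENNReal.ofReal (H * Real.exp (-a * (M + excess))) := htail _ (by positivity)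
    _ = ENNReal.ofReal (H * Real.exp (-a * M)) * ENNReal.ofReal (Real.exp (-a * excess)) := by
        rw [← ENNReal.ofReal_mul' (Real.exp_nonneg _), mul_add, Real.exp_add, mul_assoc]
    _ ≤ _ := by gcongr

theorem stmt_16_general {ι : Type*} [Fintype ι] {S : Finset ι → Ω → ℝ} (hC : 0 ≤ C) (ha : 0 < a)
    (htail : ∀ (I : Finset ι) (t : ℝ), 0 ≤ t →
      μ {ω | C * #I + t ≤ S I ω} ≤ ENNReal.ofReal (H * Real.exp (-a * t)))
    (hq : 1 < q) (hm : a⁻¹ * ((C * a + 2) / Real.log q + 1) ≤ m) (hM : 0 ≤ M) :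
    ∑ I : Finset ι, μ {ω | m * #I * Real.log (q * Fintype.card ι / #I) + M ≤ S I ω} ≤
      ENNReal.ofReal (H / (1 - Real.exp (-1)) * Real.exp (-a * M)) := by
  have hratio : Real.exp (-2) * Real.exp 1 = Real.exp (-1) := by
    rw [← Real.exp_add]
    norm_num
  have hlt : Real.exp (-1) < 1 := Real.exp_lt_one_iff.2 (by norm_num)
  have hweights : ∑ I : Finset ι, Real.exp (-2) ^ #I * ((#I : ℝ) / Fintype.card ι) ^ #I ≤
      (1 - Real.exp (-1))⁻¹ := by
    rw [← hratio] at hlt ⊢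
    exact sum_finset_pow_card_mul_div_pow_card_le ι (Real.exp_nonneg _) hlt
  calc ∑ I : Finset ι, μ {ω | m * #I * Real.log (q * Fintype.card ι / #I) + M ≤ S I ω}
      ≤ ∑ I : Finset ι, ENNReal.ofReal (H * Real.exp (-a * M)) *
          ENNReal.ofReal (Real.exp (-2) ^ #I * ((#I : ℝ) / Fintype.card ι) ^ #I) :=
        sum_le_sum fun I _ =>
          measure_mul_log_add_le_le hC ha (htail I) hq hm (card_le_univ I) hM
    _ = ENNReal.ofReal (H * Real.exp (-a * M)) * ENNReal.ofReal
          (∑ I : Finset ι, Real.exp (-2) ^ #I * ((#I : ℝ) / Fintype.card ι) ^ #I) := by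
        rw [ENNReal.ofReal_sum_of_nonneg fun I _ => by positivity, mul_sum]
    _ ≤ ENNReal.ofReal (H * Real.exp (-a * M)) * ENNReal.ofReal (1 - Real.exp (-1))⁻¹ := by
        gcongr
    _ = ENNReal.ofReal (H / (1 - Real.exp (-1)) * Real.exp (-a * M)) := by
        rw [← ENNReal.ofReal_mul' (inv_nonneg.2 (sub_nonneg.2 hlt.le)), div_mul_eq_mul_div,
          div_eq_mul_inv]

end TailBounds

theorem stmt_16 (n : ℕ) (σ : ℝ) (hσ : 0 < σ)
    (Cξ Hξ αξ : ℝ) (hCξ : 0 < Cξ) (hHξ : 0 < Hξ) (hαξ : 0 < αξ)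
    (P : (Fin n → ℝ) → Measure (Fin n → ℝ))
    (hP : ∀ θ, IsProbabilityMeasure (P θ))
    (hA1 : ∀ (θ : Fin n → ℝ) (I : Finset (Fin n)) (M : ℝ), 0 ≤ M →
      P θ {x | Cξ * I.card + M ≤ ∑ i ∈ I, ((x i - θ i) / σ) ^ 2}
        ≤ ENNReal.ofReal (Hξ * Real.exp (-αξ * M)))
    (q' Mξ : ℝ) (hq' : 1 < q')
    (hMξ : αξ⁻¹ * ((Cξ * αξ + 2) / Real.log q' + 1) ≤ Mξ)
    (θ : Fin n → ℝ) (M : ℝ) (hM : 0 ≤ M) :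
    (∑ I : Finset (Fin n),
        P θ {x | Mξ * I.card * Real.log (q' * n / I.card) + M
          ≤ ∑ i ∈ I, ((x i - θ i) / σ) ^ 2})
      ≤ ENNReal.ofReal (Hξ / (1 - Real.exp (-1)) * Real.exp (-αξ * M)) := by
  simpa only [Fintype.card_fin] using stmt_16_general hCξ.le hαξ (hA1 θ) hq' hMξ hM
end

section
/- Let n ≥ 1, A > 0, σ > 0, q = e², θ ∈ ℝⁿ, and let I_* be any minimizer over I ⊆ [n] of r²(I,θ) := ∑_{i∉I} θ_i² + Aσ²·|I|·log(qn/|I|) (with the convention that the penalty is 0 for I = ∅). Then: (a) every i ∈ [n] with θ_i² > Aσ²·log(qn/(|I_*| + 1)) belongs to I_*; (b) every i ∈ I_* satisfies θ_i² ≥ Aσ²·log(en/|I_*|). -/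
open MeasureTheory Finset
open scoped Classical

/-!
Compare the minimizer `I` with the sets obtained from it by inserting or removing one index `i`.
Inserting `i` trades `w i` for a penalty increment, so `i ∉ I` forces `w i` to be at most the next
increment; in the same way `i ∈ I` forces `w i` to be at least the last one. The increments of the
concave function `g y = y * log (x / y)` satisfy
`log (x / (y + 1)) - 1 = g' (y + 1) ≤ g (y + 1) - g y ≤ log (x / (y + 1))`.
-/

section PenalizedRisk

variable {ι M : Type*} [Fintype ι] [DecidableEq ι] [AddCommGroup M]

/-- The penalized least-squares criterion of a model `I`: the total weight `w` left outside `I` plus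
a penalty `pen` depending only on the size of `I`. The paper's `r²(I, θ)` has `w i = θ i ^ 2`. -/
def penalizedRisk (w : ι → M) (pen : ℕ → M) (I : Finset ι) : M :=
  ∑ i ∈ Iᶜ, w i + pen #I

theorem penalizedRisk_insert (w : ι → M) (pen : ℕ → M) {I : Finset ι} {i : ι} (hi : i ∉ I) :
    penalizedRisk w pen (insert i I) = penalizedRisk w pen I + (pen (#I + 1) - pen #I) - w i := by
  have hsum : w i + ∑ j ∈ Iᶜ.erase i, w j = ∑ j ∈ Iᶜ, w j :=
    add_sum_erase _ _ (mem_compl.2 hi)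
  rw [penalizedRisk, penalizedRisk, card_insert_of_notMem hi, compl_insert, ← hsum]
  abel

variable [PartialOrder M] [IsOrderedAddMonoid M] {w : ι → M} {pen : ℕ → M} {I : Finset ι} {i : ι}

theorem penalizedRisk_le_insert_iff (hi : i ∉ I) :
    penalizedRisk w pen I ≤ penalizedRisk w pen (insert i I) ↔
      w i ≤ pen (#I + 1) - pen #I := by
  rw [penalizedRisk_insert w pen hi, le_sub_iff_add_le, add_le_add_iff_left]

theorem penalizedRisk_insert_le_iff (hi : i ∉ I) :
    penalizedRisk w pen (insert i I) ≤ penalizedRisk w pen I ↔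
      pen (#I + 1) - pen #I ≤ w i := by
  rw [penalizedRisk_insert w pen hi, sub_le_iff_le_add, add_le_add_iff_left]

end PenalizedRisk

section LogPenalty

/-- The penalty `y * log (x / y)` for models of size `y`, where `x` stands for `q * n`. The size is
a real number here, and the value at `y = 0` is `0`. -/
noncomputable def logPenalty (x y : ℝ) : ℝ := y * Real.log (x / y)

variable {x y z : ℝ}

theorem logPenalty_nonneg (hy : 0 ≤ y) (hyx : y ≤ x) : 0 ≤ logPenalty x y := by
  rcases hy.eq_or_lt with rfl | hy
  · simp [logPenalty]
  · exact mul_nonneg hy.le (Real.log_nonneg ((one_le_div hy).2 hyx))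

theorem logPenalty_le_sub (hx : 0 < x) (hy : 0 ≤ y) : logPenalty x y ≤ x - y := by
  rcases hy.eq_or_lt with rfl | hy
  · simpa [logPenalty] using hx.le
  · calc
      y * Real.log (x / y) ≤ y * (x / y - 1) := by
        gcongr
        exact Real.log_le_sub_one_of_pos (by positivity)
      _ = x - y := by field_simp

theorem logPenalty_eq_mul_log_add (hx : x ≠ 0) (hz : z ≠ 0) (y : ℝ) :
    logPenalty x y = y * Real.log (x / z) + logPenalty z y := by
  rcases eq_or_ne y 0 with rfl | hy
  · simp [logPenalty]
  · rw [logPenalty, logPenalty, Real.log_div hx hy, Real.log_div hx hz, Real.log_div hz hy]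
    ring

theorem logPenalty_add_one_sub (hx : x ≠ 0) (hy : 0 ≤ y) :
    logPenalty x (y + 1) - logPenalty x y = Real.log (x / (y + 1)) - logPenalty (y + 1) y := by
  rw [logPenalty_eq_mul_log_add hx (by positivity : y + 1 ≠ 0) y, logPenalty]
  ring

theorem logPenalty_add_one_sub_le (hx : x ≠ 0) (hy : 0 ≤ y) :
    logPenalty x (y + 1) - logPenalty x y ≤ Real.log (x / (y + 1)) := by
  rw [logPenalty_add_one_sub hx hy]
  exact sub_le_self _ (logPenalty_nonneg hy (by linarith))

theorem log_div_exp_one_mul (hx : x ≠ 0) (hz : z ≠ 0) :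
    Real.log (x / (Real.exp 1 * z)) = Real.log (x / z) - 1 := by
  rw [mul_comm, ← div_div, Real.log_div (div_ne_zero hx hz) (Real.exp_ne_zero 1), Real.log_exp]

theorem le_logPenalty_add_one_sub (hx : x ≠ 0) (hy : 0 ≤ y) :
    Real.log (x / (Real.exp 1 * (y + 1))) ≤ logPenalty x (y + 1) - logPenalty x y := by
  rw [log_div_exp_one_mul hx (by positivity), logPenalty_add_one_sub hx hy]
  linarith [logPenalty_le_sub (by positivity : 0 < y + 1) hy]

end LogPenalty

theorem exp_two_mul_div_exp_one_mul (a b : ℝ) :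
    Real.exp 2 * a / (Real.exp 1 * b) = Real.exp 1 * a / b := by
  rw [← one_add_one_eq_two, Real.exp_add, mul_assoc, mul_div_mul_left _ _ (Real.exp_ne_zero 1)]

theorem stmt_17_general {ι : Type*} [Fintype ι] [DecidableEq ι] {x c : ℝ} (hx : 0 < x)
    (hc : 0 ≤ c) (w : ι → ℝ) (I : Finset ι)
    (hinsert : ∀ i ∉ I, penalizedRisk w (fun k ↦ c * logPenalty x k) I ≤
      penalizedRisk w (fun k ↦ c * logPenalty x k) (insert i I))
    (herase : ∀ i ∈ I, penalizedRisk w (fun k ↦ c * logPenalty x k) I ≤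
      penalizedRisk w (fun k ↦ c * logPenalty x k) (I.erase i)) :
    (∀ i, c * Real.log (x / (#I + 1)) < w i → i ∈ I) ∧
      ∀ i ∈ I, c * Real.log (x / (Real.exp 1 * #I)) ≤ w i := by
  refine ⟨fun i hi ↦ ?_, fun i hi ↦ ?_⟩
  · by_contra hmem
    refine hi.not_ge ?_
    calc
      w i ≤ c * logPenalty x ↑(#I + 1) - c * logPenalty x #I :=
        (penalizedRisk_le_insert_iff hmem).1 (hinsert i hmem)
      _ = c * (logPenalty x (#I + 1) - logPenalty x #I) := by push_cast; ring
      _ ≤ c * Real.log (x / (#I + 1)) := by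
        gcongr
        exact logPenalty_add_one_sub_le hx.ne' (Nat.cast_nonneg _)
  · obtain ⟨J, hiJ, rfl⟩ : ∃ J, i ∉ J ∧ insert i J = I :=
      ⟨I.erase i, notMem_erase i I, insert_erase hi⟩
    have hle := herase i hi
    rw [erase_insert hiJ] at hle
    rw [card_insert_of_notMem hiJ, Nat.cast_add_one]
    calc
      c * Real.log (x / (Real.exp 1 * (#J + 1)))
          ≤ c * (logPenalty x (#J + 1) - logPenalty x #J) := by
        gcongr
        exact le_logPenalty_add_one_sub hx.ne' (Nat.cast_nonneg _)
      _ = c * logPenalty x ↑(#J + 1) - c * logPenalty x #J := by push_cast; ring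
      _ ≤ w i := (penalizedRisk_insert_le_iff hiJ).1 hle

theorem stmt_17 (n : ℕ) (hn : 1 ≤ n) (A σ : ℝ) (hA : 0 < A) (hσ : 0 < σ)
    (θ : Fin n → ℝ) (Istar : Finset (Fin n))
    (hmin : ∀ I : Finset (Fin n),
      (∑ i ∈ Istarᶜ, θ i ^ 2) + A * σ ^ 2 * ell n Istar.card
        ≤ (∑ i ∈ Iᶜ, θ i ^ 2) + A * σ ^ 2 * ell n I.card) :
    (∀ i : Fin n,
      A * σ ^ 2 * Real.log (Real.exp 2 * n / (Istar.card + 1)) < θ i ^ 2 → i ∈ Istar) ∧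
    (∀ i ∈ Istar, A * σ ^ 2 * Real.log (Real.exp 1 * n / Istar.card) ≤ θ i ^ 2) := by
  simpa only [exp_two_mul_div_exp_one_mul] using stmt_17_general (x := Real.exp 2 * n)
    (by positivity) (by positivity) (fun i ↦ θ i ^ 2) Istar (fun _ _ ↦ hmin _) (fun _ _ ↦ hmin _)
end

section
/- Let n ≥ 1, A > 0, σ > 0, q = e², θ ∈ ℝⁿ, let S(θ) := {i ∈ [n] : θ_i ≠ 0} with s := |S(θ)| ≥ 1, and suppose θ_i² ≥ Aσ²·log(qn/s) for every i ∈ S(θ). Then for every A′ ∈ (0, A], the support S(θ) is a minimizer over I ⊆ [n] of the criterion r²_{A′}(I,θ) := ∑_{i∉I} θ_i² + A′σ²·|I|·log(qn/|I|) (with the convention that the penalty is 0 for I = ∅); that is, the active set at every level A′ ≤ A can be taken equal to the support of θ. -/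
open MeasureTheory Finset
open scoped Classical

/-!
Split the support `S` into the part `S \ I` missed by `I` and the part `S ∩ I` kept by it, and
charge the cost `|S| t`, where `t = A′σ² log (qn/|S|)`, coordinate by coordinate. A missed one
adds at least `t` to the residual of `I` by the signal condition. The `k = |S ∩ I|` kept ones cost
`k t`, which is at most the penalty at `k` because `log (qn/k) ≥ log (qn/|S|)`, hence at most the
penalty at `|I|` by monotonicity.
-/

section PenalizedSelection

variable {ι M : Type*} [Fintype ι] [DecidableEq ι] [AddCommMonoid M] [PartialOrder M]

/-- The model selection criterion `r²(I)`: the total weight (`θ i ^ 2` in the application) of the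
coordinates left out of `I`, plus a penalty `p` on the size of `I`. -/
def penalizedResidual (w : ι → M) (p : ℕ → M) (I : Finset ι) : M :=
  ∑ i ∈ Iᶜ, w i + p #I

theorem card_sdiff_nsmul_le_sum_compl [IsOrderedAddMonoid M] {w : ι → M} {t : M} {S : Finset ι}
    (hw : ∀ i, 0 ≤ w i) (ht : ∀ i ∈ S, t ≤ w i) (I : Finset ι) :
    #(S \ I) • t ≤ ∑ i ∈ Iᶜ, w i :=
  calc #(S \ I) • t
      ≤ ∑ i ∈ S \ I, w i := card_nsmul_le_sum _ _ _ fun i hi => ht i (mem_sdiff.mp hi).1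
    _ ≤ ∑ i ∈ Iᶜ, w i := sum_le_sum_of_subset_of_nonneg
        (fun _ hi => mem_compl.mpr (mem_sdiff.mp hi).2) fun i _ _ => hw i

theorem isMinOn_penalizedResidual [IsOrderedAddMonoid M] {w : ι → M} {p : ℕ → M} {t : M}
    {S : Finset ι} (hw : ∀ i, 0 ≤ w i) (hw_zero : ∀ i ∉ S, w i = 0) (ht : ∀ i ∈ S, t ≤ w i)
    (hp_mono : MonotoneOn p (Set.Iic (Fintype.card ι))) (hp_card : p #S ≤ #S • t)
    (hp_ge : ∀ k ≤ #S, k • t ≤ p k) :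
    IsMinOn (penalizedResidual w p) Set.univ S := by
  refine isMinOn_univ_iff.mpr fun I => ?_
  have residual_eq_zero : ∑ i ∈ Sᶜ, w i = 0 :=
    sum_eq_zero fun i hi => hw_zero i (mem_compl.mp hi)
  have kept_le : #(S ∩ I) • t ≤ p #I :=
    (hp_ge _ (card_le_card inter_subset_left)).trans <|
      hp_mono (card_le_univ _) (card_le_univ _) (card_le_card inter_subset_right)
  calc penalizedResidual w p S
      ≤ #S • t := by rwa [penalizedResidual, residual_eq_zero, zero_add]
    _ = #(S \ I) • t + #(S ∩ I) • t := by rw [← add_nsmul, card_sdiff_add_card_inter]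
    _ ≤ penalizedResidual w p I :=
        add_le_add (card_sdiff_nsmul_le_sum_compl hw ht I) kept_le

end PenalizedSelection

theorem mul_log_div_le_mul_log_div {a x y : ℝ} (ha : 0 ≤ a) (hx : 0 ≤ x) (hxy : x ≤ y) :
    x * Real.log (a / y) ≤ x * Real.log (a / x) := by
  rcases ha.eq_or_lt with rfl | ha
  · simp
  rcases hx.eq_or_lt with rfl | hx
  · simp
  have hy : 0 < y := hx.trans_le hxy
  gcongr

theorem monotoneOn_mul_log_div (a : ℝ) :
    MonotoneOn (fun x => x * Real.log (a / x)) (Set.Icc 0 (a / Real.exp 1)) := by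
  rintro x ⟨hx, hxa⟩ y ⟨hy, hya⟩ hxy
  have exp_one_le : ∀ z, 0 < z → z ≤ a / Real.exp 1 → Real.exp 1 ≤ a / z :=
    fun z hz hza => (le_div_comm₀ hz (Real.exp_pos 1)).mp hza
  rcases hy.eq_or_lt with rfl | hy
  · rw [le_antisymm hxy hx]
  rcases hx.eq_or_lt with rfl | hx
  · simp only [zero_mul]
    exact mul_nonneg hy.le <| Real.log_nonneg <|
      (Real.one_le_exp zero_le_one).trans (exp_one_le y hy hya)
  have ha : 0 < a := (div_pos_iff_of_pos_right (Real.exp_pos 1)).mp (hy.trans_le hya)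
  have mul_log_eq : ∀ z, 0 < z → z * Real.log (a / z) = a * (Real.log (a / z) / (a / z)) :=
    fun z hz => by field_simp
  simp only [mul_log_eq x hx, mul_log_eq y hy]
  exact mul_le_mul_of_nonneg_left (Real.log_div_self_antitoneOn (exp_one_le y hy hya)
    (exp_one_le x hx hxa) (div_le_div_of_nonneg_left ha.le hx hxy)) ha.le

theorem log_exp_two_mul_div_nonneg {n k : ℕ} (hkn : k ≤ n) :
    0 ≤ Real.log (Real.exp 2 * n / k) := by
  rcases k.eq_zero_or_pos with rfl | hk
  · simp
  refine Real.log_nonneg ((one_le_div (Nat.cast_pos.mpr hk)).mpr ?_)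
  calc (k : ℝ) ≤ n := Nat.cast_le.mpr hkn
    _ ≤ Real.exp 2 * n :=
        le_mul_of_one_le_left n.cast_nonneg (Real.one_le_exp zero_le_two)

theorem monotoneOn_ell (n : ℕ) : MonotoneOn (ell n) (Set.Iic n) := by
  have mem_Icc : ∀ k ∈ Set.Iic n, (k : ℝ) ∈ Set.Icc 0 (Real.exp 2 * n / Real.exp 1) := by
    refine fun k hk => ⟨k.cast_nonneg, ?_⟩
    calc (k : ℝ) ≤ n := Nat.cast_le.mpr hk
      _ ≤ Real.exp (2 - 1) * n :=
          le_mul_of_one_le_left n.cast_nonneg (Real.one_le_exp (by norm_num))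
      _ = Real.exp 2 * n / Real.exp 1 := by rw [Real.exp_sub, div_mul_eq_mul_div]
  exact fun j hj k hk hjk =>
    monotoneOn_mul_log_div _ (mem_Icc j hj) (mem_Icc k hk) (Nat.cast_le.mpr hjk)

theorem mul_log_le_ell (n : ℕ) {k s : ℕ} (hks : k ≤ s) :
    k * Real.log (Real.exp 2 * n / s) ≤ ell n k :=
  mul_log_div_le_mul_log_div (by positivity) k.cast_nonneg (Nat.cast_le.mpr hks)

theorem stmt_18 (n : ℕ) (hn : 1 ≤ n) (A σ : ℝ) (hA : 0 < A) (hσ : 0 < σ)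
    (θ : Fin n → ℝ) (S : Finset (Fin n)) (hS : S = Finset.univ.filter fun i => θ i ≠ 0)
    (hs : 1 ≤ S.card)
    (hsig : ∀ i ∈ S, A * σ ^ 2 * Real.log (Real.exp 2 * n / S.card) ≤ θ i ^ 2) :
    ∀ A' : ℝ, 0 < A' → A' ≤ A → ∀ I : Finset (Fin n),
      (∑ i ∈ Sᶜ, θ i ^ 2) + A' * σ ^ 2 * ell n S.card
        ≤ (∑ i ∈ Iᶜ, θ i ^ 2) + A' * σ ^ 2 * ell n I.card := by
  intro A' hA' hAA'
  set t := A' * σ ^ 2 * Real.log (Real.exp 2 * n / #S) with ht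
  have log_nonneg : 0 ≤ Real.log (Real.exp 2 * n / #S) :=
    log_exp_two_mul_div_nonneg (by simpa using card_le_univ S)
  have off_support : ∀ i ∉ S, θ i ^ 2 = 0 := by simp [hS]
  have signal : ∀ i ∈ S, t ≤ θ i ^ 2 := fun i hi =>
    calc t ≤ A * σ ^ 2 * Real.log (Real.exp 2 * n / #S) := by rw [ht]; gcongr
      _ ≤ θ i ^ 2 := hsig i hi
  have penalty_mono :
      MonotoneOn (fun k => A' * σ ^ 2 * ell n k) (Set.Iic (Fintype.card (Fin n))) := by
    rw [Fintype.card_fin]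
    exact fun j hj k hk hjk =>
      mul_le_mul_of_nonneg_left (monotoneOn_ell n hj hk hjk) (by positivity)
  have penalty_card : A' * σ ^ 2 * ell n #S = #S • t := by
    rw [ht, nsmul_eq_mul, ell, mul_left_comm]
  have penalty_ge : ∀ k ≤ #S, k • t ≤ A' * σ ^ 2 * ell n k := fun k hk => by
    rw [ht, nsmul_eq_mul, mul_left_comm]
    exact mul_le_mul_of_nonneg_left (mul_log_le_ell n hk) (by positivity)
  exact isMinOn_univ_iff.mp <| isMinOn_penalizedResidual (fun i => sq_nonneg (θ i))
    off_support signal penalty_mono penalty_card.le penalty_ge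
end

section
/- Let n ≥ 1, K > 0, σ > 0, q = e², θ ∈ ℝⁿ, let ℙ_θ be the law of X ∈ ℝⁿ, ξ := (X − θ)/σ, ℓ(k) := k·log(qn/k) with ℓ(0) := 0, and let Ĩ be a measurable selection of argmin_{I ⊆ [n]} { ∑_{i∉I} X_i² + Kσ²ℓ(|I|) }. Then, without any assumption on the distribution of ξ, for all subsets I, I₀ ⊆ [n]: (a) if I₀ ⊆ I, then ℙ_θ( Ĩ = I ) ≤ ℙ_θ( ∑_{i∈I∖I₀} ξ_i² ≥ (K/2)·(ℓ(|I|) − ℓ(|I₀|)) − ∑_{i∈I∖I₀} θ_i²/σ² ); (b) if I ⊆ I₀, then ℙ_θ( Ĩ = I ) ≤ ℙ_θ( ∑_{i∈I₀∖I} ξ_i² ≥ ∑_{i∈I₀∖I} θ_i²/(2σ²) + K·(ℓ(|I|) − ℓ(|I₀|)) ). -/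
open MeasureTheory Finset
open scoped Classical

/-! Comparing the selected set `Ĩ` with a nested competitor `J` in the minimized criterion bounds
the energy `∑ Xᵢ²` over their difference: from below by the penalty gap if `J ⊆ Ĩ`, from above if
`Ĩ ⊆ J`. Splitting `Xᵢ` into signal and noise by `(a + b)² ≤ 2(a² + b²)` turns either bound into a
lower bound for the noise energy, pathwise. -/

theorem sum_sq_le_two_mul_sum_sq_add_sum_sub_sq {ι R : Type*} [CommRing R] [LinearOrder R]
    [IsStrictOrderedRing R] (s : Finset ι) (f g : ι → R) :
    ∑ i ∈ s, f i ^ 2 ≤ 2 * (∑ i ∈ s, g i ^ 2 + ∑ i ∈ s, (f i - g i) ^ 2) := by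
  rw [← sum_add_distrib, mul_sum]
  exact sum_le_sum fun i _ => by
    simpa only [add_sub_cancel] using add_sq_le (a := g i) (b := f i - g i)

section PenalizedRSS

variable {ι : Type*} [Fintype ι] [DecidableEq ι]

section CommRing

variable {R : Type*} [CommRing R]

/-- The penalized residual sum of squares of the model `I`, that is, of the estimator of the mean of
`x` that keeps the coordinates in `I` and sets the others to zero. -/
def penalizedRSS (pen : Finset ι → R) (x : ι → R) (I : Finset ι) : R :=
  ∑ i ∈ Iᶜ, x i ^ 2 + pen I

theorem penalizedRSS_sub_of_subset (pen : Finset ι → R) (x : ι → R) {A B : Finset ι}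
    (h : A ⊆ B) :
    penalizedRSS pen x A - penalizedRSS pen x B = ∑ i ∈ B \ A, x i ^ 2 - (pen B - pen A) := by
  have hsum : ∑ i ∈ Aᶜ, x i ^ 2 = ∑ i ∈ B \ A, x i ^ 2 + ∑ i ∈ Bᶜ, x i ^ 2 := by
    rw [← sum_sdiff (compl_subset_compl.mpr h), compl_sdiff_compl]
  rw [penalizedRSS, penalizedRSS, hsum]
  ring

end CommRing

theorem penalizedRSS_div {𝕜 : Type*} [Field 𝕜] (pen : Finset ι → 𝕜) (x : ι → 𝕜) {σ : 𝕜}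
    (hσ : σ ≠ 0) (I : Finset ι) :
    penalizedRSS pen (fun i => x i / σ) I =
      penalizedRSS (fun J => σ ^ 2 * pen J) x I / σ ^ 2 := by
  simp only [penalizedRSS, div_pow, ← sum_div, add_div]
  rw [mul_div_cancel_left₀ _ (pow_ne_zero 2 hσ)]

section OrderedField

variable {𝕜 : Type*} [Field 𝕜] [LinearOrder 𝕜] [IsStrictOrderedRing 𝕜]
  {pen : Finset ι → 𝕜} {x : ι → 𝕜} {A B : Finset ι}

theorem half_pen_sub_sub_sum_sq_le_of_penalizedRSS_le (h : A ⊆ B)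
    (hle : penalizedRSS pen x B ≤ penalizedRSS pen x A) (θ : ι → 𝕜) :
    (pen B - pen A) / 2 - ∑ i ∈ B \ A, θ i ^ 2 ≤ ∑ i ∈ B \ A, (x i - θ i) ^ 2 := by
  have hpen : pen B - pen A ≤ ∑ i ∈ B \ A, x i ^ 2 := by
    linarith [penalizedRSS_sub_of_subset pen x h]
  linarith [sum_sq_le_two_mul_sum_sq_add_sum_sub_sq (B \ A) x θ]

theorem half_sum_sq_add_pen_sub_le_of_penalizedRSS_le (h : A ⊆ B)
    (hle : penalizedRSS pen x A ≤ penalizedRSS pen x B) (θ : ι → 𝕜) :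
    (∑ i ∈ B \ A, θ i ^ 2) / 2 + (pen A - pen B) ≤ ∑ i ∈ B \ A, (x i - θ i) ^ 2 := by
  have hpen : ∑ i ∈ B \ A, x i ^ 2 ≤ pen B - pen A := by
    linarith [penalizedRSS_sub_of_subset pen x h]
  have hsplit := sum_sq_le_two_mul_sum_sq_add_sum_sub_sq (B \ A) θ x
  simp only [sub_sq_comm (θ _)] at hsplit
  linarith

end OrderedField

end PenalizedRSS

theorem stmt_19_general {ι Ω : Type*} [Fintype ι] [DecidableEq ι] [MeasurableSpace Ω]
    (P : Measure Ω) (X : Ω → ι → ℝ) (θ : ι → ℝ) {σ : ℝ} (hσ : σ ≠ 0) (pen : Finset ι → ℝ)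
    (Itil : Ω → Finset ι)
    (hItil : ∀ ω I, penalizedRSS (fun J => σ ^ 2 * pen J) (X ω) (Itil ω) ≤
      penalizedRSS (fun J => σ ^ 2 * pen J) (X ω) I) :
    (∀ I I₀ : Finset ι, I₀ ⊆ I →
      P {ω | Itil ω = I} ≤
        P {ω | (pen I - pen I₀) / 2 - ∑ i ∈ I \ I₀, θ i ^ 2 / σ ^ 2 ≤
          ∑ i ∈ I \ I₀, ((X ω i - θ i) / σ) ^ 2}) ∧
    (∀ I I₀ : Finset ι, I ⊆ I₀ →
      P {ω | Itil ω = I} ≤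
        P {ω | ∑ i ∈ I₀ \ I, θ i ^ 2 / (2 * σ ^ 2) + (pen I - pen I₀) ≤
          ∑ i ∈ I₀ \ I, ((X ω i - θ i) / σ) ^ 2}) := by
  have hmin (ω : Ω) (I : Finset ι) : penalizedRSS pen (fun i => X ω i / σ) (Itil ω) ≤
      penalizedRSS pen (fun i => X ω i / σ) I := by
    simp only [penalizedRSS_div pen _ hσ]
    exact div_le_div_of_nonneg_right (hItil ω I) (sq_nonneg σ)
  refine ⟨fun I I₀ h => measure_mono ?_, fun I I₀ h => measure_mono ?_⟩
  · rintro ω rfl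
    simpa only [Set.mem_ofPred_eq, div_pow, ← sub_div] using
      half_pen_sub_sub_sum_sq_le_of_penalizedRSS_le h (hmin ω I₀) (fun i => θ i / σ)
  · rintro ω rfl
    simpa only [Set.mem_ofPred_eq, div_pow, ← sub_div, sum_div, div_div, mul_comm (σ ^ 2)] using
      half_sum_sq_add_pen_sub_le_of_penalizedRSS_le h (hmin ω I₀) (fun i => θ i / σ)

theorem stmt_19 (n : ℕ) (hn : 1 ≤ n) (K σ : ℝ) (hK : 0 < K) (hσ : 0 < σ)
    (θ : Fin n → ℝ) (P : Measure (Fin n → ℝ))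
    (Itil : (Fin n → ℝ) → Finset (Fin n))
    (hItil : ∀ (x : Fin n → ℝ) (I : Finset (Fin n)),
      (∑ i ∈ (Itil x)ᶜ, x i ^ 2) + K * σ ^ 2 * ell n (Itil x).card
        ≤ (∑ i ∈ Iᶜ, x i ^ 2) + K * σ ^ 2 * ell n I.card) :
    (∀ I I₀ : Finset (Fin n), I₀ ⊆ I →
      P {x | Itil x = I}
        ≤ P {x | K / 2 * (ell n I.card - ell n I₀.card) -
              (∑ i ∈ I \ I₀, θ i ^ 2 / σ ^ 2)
            ≤ ∑ i ∈ I \ I₀, ((x i - θ i) / σ) ^ 2}) ∧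
    (∀ I I₀ : Finset (Fin n), I ⊆ I₀ →
      P {x | Itil x = I}
        ≤ P {x | (∑ i ∈ I₀ \ I, θ i ^ 2 / (2 * σ ^ 2)) +
              K * (ell n I.card - ell n I₀.card)
            ≤ ∑ i ∈ I₀ \ I, ((x i - θ i) / σ) ^ 2}) := by
  simpa only [id, ← mul_sub, mul_div_right_comm] using
    stmt_19_general P id θ hσ.ne' (fun I => K * ell n I.card) Itil fun x I => by
      simpa only [penalizedRSS, id, mul_assoc, mul_left_comm (σ ^ 2) K] using hItil x I
end
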